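/- Let A be a d×n integer matrix of rank d with nonzero columns a₁,…,aₙ ∈ ℤ^d such that ℕA is pointed and ℤA = ℤ^d, and let L ∈ ℚⁿ be any weight vector. Then every minimal prime of the initial ideal in_L(I_A) in ℂ[∂₁,…,∂ₙ] has height n − d; in particular, the Krull dimension of ℂ[∂₁,…,∂ₙ]/in_L(I_A) equals d. -/

import Mathlib

/-!
The initial ideal `J = in_L(I_A)` is the special fibre of a Gröbner degeneration whose total space
is itself an affine toric variety, and the special fibre is cut out by a single equation.

Write `S = ℂ[∂₁,…,∂ₙ]`. Only the order of the weights matters, so `L` may be replaced by an integral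
weight `ω` (`exists_int_weight`). Let `φ : S[t] → ℂ[ℤ^d × ℤ]` send `∂^u t^k` to the monomial of
exponent `(A u, ω u + k)`, and let `D` be its image, a finitely generated domain. The key statement
is `comap_initialIdeal`: the preimage of `J` under `t ↦ 0` equals the preimage of the principal
ideal `(φ t)` of `D`, i.e. `S / J ≅ D / (φ t)`. One inclusion comes from homogenizing the elements of
`I_A` with respect to `ω`; for the other, a function on the exponents `(A u, ω u + k)` with values in
`S / J` is well defined because `∂^u - ∂^v` (if `ω u = ω v`), respectively `∂^u` (if `ω v < ω u`), is
an initial form whenever `A u = A v`.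

Since `ℤA = ℤ^d`, the group algebra `ℂ[ℤ^d × ℤ]` is algebraic over `D`, so `D` has transcendence
degree `d + 1` (`tdeg_degen`). A minimal prime `p` of `J` corresponds to a minimal prime `Q` of
`(φ t)`, which is nonzero and has height at most one by Krull's principal ideal theorem. Hence
`S / p ≅ D / Q` has transcendence degree `d` (`tdeg_quotient_add_one`, by Noether normalization and
going down), and the dimension formula `height p + trdeg (S / p) = n` for polynomial rings
(`dimFormula_mvPolynomial`) gives the height of `p`.

Pointedness, with the columns being nonzero, makes `J` a proper ideal (`initialIdeal_ne_top`), so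
that minimal primes exist. A chain of primes above `J` has length at most `d` because heights in `S`
increase strictly from at least `n - d` to at most `n`; conversely `dim S / p` is at least the
transcendence degree `d` of `S / p`.
-/

open MvPolynomial CategoryTheory

noncomputable section

/-- The set of columns of an integer matrix. -/
def cols {d n : ℕ} (A : Matrix (Fin d) (Fin n) ℤ) : Set (Fin d → ℤ) :=
  Set.range fun j i => A i j

/-- The affine semigroup `ℕA` generated by the columns of `A` is pointed. -/
def IsPointed {d n : ℕ} (A : Matrix (Fin d) (Fin n) ℤ) : Prop :=
  ∀ v ∈ AddSubmonoid.closure (cols A),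
    -v ∈ AddSubmonoid.closure (cols A) → v = 0

/-- The toric ideal `I_A ⊆ ℂ[∂₁,…,∂ₙ]`, generated by the binomials
`∂^u - ∂^v` with `Au = Av`. -/
def toricIdeal {d n : ℕ} (A : Matrix (Fin d) (Fin n) ℤ) :
    Ideal (MvPolynomial (Fin n) ℂ) :=
  Ideal.span { f | ∃ u v : Fin n →₀ ℕ,
    A.mulVec (fun j => (u j : ℤ)) = A.mulVec (fun j => (v j : ℤ)) ∧
    f = monomial u 1 - monomial v 1 }

/-- The `L`-weight of an exponent vector. -/
def wt {n : ℕ} (L : Fin n → ℚ) (u : Fin n →₀ ℕ) : ℚ := ∑ j, L j * (u j : ℚ)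

/-- The `L`-initial form of a polynomial: the sum of its terms of maximal `L`-weight. -/
def initialForm {n : ℕ} (L : Fin n → ℚ) (f : MvPolynomial (Fin n) ℂ) :
    MvPolynomial (Fin n) ℂ :=
  ∑ u ∈ f.support.filter fun u => ∀ v ∈ f.support, wt L v ≤ wt L u,
    monomial u (f.coeff u)

/-- The `L`-initial ideal `in_L(I)` of an ideal `I ⊆ ℂ[∂₁,…,∂ₙ]`. -/
def initialIdeal {n : ℕ} (L : Fin n → ℚ) (I : Ideal (MvPolynomial (Fin n) ℂ)) :
    Ideal (MvPolynomial (Fin n) ℂ) :=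
  Ideal.span { g | ∃ f ∈ I, f ≠ 0 ∧ g = initialForm L f }

/-- The depth of a Noetherian local ring `R`, i.e. `inf { i | Ext^i_R(R/m, R) ≠ 0 }`. -/
def ringDepth (R : Type) [CommRing R] [IsLocalRing R] : ℕ∞ :=
  sInf { i : ℕ∞ | ∃ m : ℕ, i = m ∧
    Nontrivial (((Ext R (ModuleCat.{0} R) m).obj
        (Opposite.op (ModuleCat.of R (R ⧸ IsLocalRing.maximalIdeal R)))).obj
      (ModuleCat.of R R)) }

/-- A commutative ring `T` is Cohen–Macaulay if for every prime ideal `p`, the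
localization `T_p` satisfies `depth = Krull dimension`. -/
def IsCohenMacaulayRing (T : Type) [CommRing T] : Prop :=
  ∀ (p : Ideal T) [p.IsPrime],
    (ringDepth (Localization.AtPrime p) : WithBot ℕ∞) =
      ringKrullDim (Localization.AtPrime p)

/-- The Euler operator `E_i = ∑ⱼ a_{ij} xⱼ ∂ⱼ` as an element of `ℂ[x,∂]`,
where `x_j = X (Sum.inl j)` and `∂_j = X (Sum.inr j)`. -/
def eulerXD {d n : ℕ} (A : Matrix (Fin d) (Fin n) ℤ) (i : Fin d) :
    MvPolynomial (Fin n ⊕ Fin n) ℂ :=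
  ∑ j, (A i j : MvPolynomial (Fin n ⊕ Fin n) ℂ) * X (Sum.inl j) * X (Sum.inr j)

/-- The inclusion `ℂ[∂] → K[∂]`, for `K` an algebra over `ℂ[x₁,…,xₙ]`
(in practice `K = ℂ(x₁,…,xₙ)`), sending `∂ⱼ` to `∂ⱼ`. -/
def toFracPoly (n : ℕ) (K : Type) [CommRing K] [Algebra (MvPolynomial (Fin n) ℂ) K] :
    MvPolynomial (Fin n) ℂ →+* MvPolynomial (Fin n) K :=
  MvPolynomial.map ((algebraMap (MvPolynomial (Fin n) ℂ) K).comp (C : ℂ →+* _))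

/-- The Euler operator `E_i = ∑ⱼ a_{ij} xⱼ ∂ⱼ` as an element of `K[∂]`
(in practice `K = ℂ(x₁,…,xₙ)`, and the `xⱼ` act as scalars). -/
def eulerFrac {d n : ℕ} (A : Matrix (Fin d) (Fin n) ℤ) (K : Type) [CommRing K]
    [Algebra (MvPolynomial (Fin n) ℂ) K] (i : Fin d) : MvPolynomial (Fin n) K :=
  ∑ j, C (algebraMap (MvPolynomial (Fin n) ℂ) K (X j)) *
    (A i j : MvPolynomial (Fin n) K) * X j

/-- The extension `in_L(I_A)·ℂ[x,∂]` of the initial ideal of the toric ideal to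
`ℂ[x,∂]`, where `x_j = X (Sum.inl j)` and `∂_j = X (Sum.inr j)`. -/
def grIdealXD {d n : ℕ} (A : Matrix (Fin d) (Fin n) ℤ) (L : Fin n → ℚ) :
    Ideal (MvPolynomial (Fin n ⊕ Fin n) ℂ) :=
  Ideal.map (rename (Sum.inr : Fin n → Fin n ⊕ Fin n)) (initialIdeal L (toricIdeal A))

/-- The extension `in_L(I_A)·K[∂]` of the initial ideal of the toric ideal to `K[∂]`
(in practice `K = ℂ(x₁,…,xₙ)`). -/
def grIdealFrac {d n : ℕ} (A : Matrix (Fin d) (Fin n) ℤ) (L : Fin n → ℚ) (K : Type)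
    [CommRing K] [Algebra (MvPolynomial (Fin n) ℂ) K] : Ideal (MvPolynomial (Fin n) K) :=
  Ideal.map (toFracPoly n K) (initialIdeal L (toricIdeal A))

/-! ### Transcendence degree and the dimension formula -/

section DimensionTheory

open scoped Polynomial

/-- A prime of `D[X]` contracting to zero in the domain `D` has height at most one: inverting the
nonzero constants does not change its height, and it becomes a prime of the one-dimensional ring
`Frac(D)[X]`. -/
theorem height_le_one_of_under_eq_bot {D : Type} [CommRing D] [IsDomain D]
    (Q : Ideal D[X]) [Q.IsPrime] (hQ : Q.comap (Polynomial.C : D →+* D[X]) = ⊥) : Q.height ≤ 1 := by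
  let K := FractionRing D
  let _ : Algebra D[X] K[X] := Polynomial.algebra ..
  have : IsLocalization (Submonoid.map Polynomial.C (nonZeroDivisors D)) K[X] :=
    Polynomial.isLocalization (nonZeroDivisors D) K
  have hdisj : Disjoint
      ((Submonoid.map Polynomial.C (nonZeroDivisors D) : Submonoid D[X]) : Set D[X]) Q := by
    refine Set.disjoint_left.mpr ?_
    rintro _ ⟨b, hb, rfl⟩ hQb
    have : b ∈ Q.comap (Polynomial.C : D →+* D[X]) := hQb
    rw [hQ] at this
    exact nonZeroDivisors.ne_zero hb this
  rw [← IsLocalization.height_map_of_disjoint (S := K[X]) _ Q hdisj]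
  have hprime : (Q.map (algebraMap D[X] K[X])).IsPrime :=
    IsLocalization.isPrime_of_isPrime_disjoint _ _ Q ‹_› hdisj
  have h := Ideal.height_le_ringKrullDim_of_ne_top hprime.ne_top
  rw [Polynomial.ringKrullDim_of_isNoetherianRing, ringKrullDim_eq_zero_of_field] at h
  simpa using h


/-- The transcendence degree of `A` over `k` as an extended natural number, infinite cardinals being
sent to `⊤`. -/
noncomputable def tdeg (k A : Type) [CommRing k] [CommRing A] [Algebra k A] : ℕ∞ :=
  Cardinal.toENat (Algebra.trdeg k A)

section TranscendenceDegree
variable (k : Type) [Field k]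

theorem tdeg_eq_of_algEquiv {A B : Type} [CommRing A] [CommRing B] [Algebra k A] [Algebra k B]
    (e : A ≃ₐ[k] B) : tdeg k A = tdeg k B := by
  rw [tdeg, tdeg, e.trdeg_eq]

theorem tdeg_eq_of_isAlgebraic (A B : Type) [CommRing A] [CommRing B] [IsDomain B]
    [Algebra k A] [Algebra k B] [Algebra A B] [IsScalarTower k A B] [FaithfulSMul A B]
    [Algebra.IsAlgebraic A B] : tdeg k A = tdeg k B := by
  have := (FaithfulSMul.algebraMap_injective A B).isDomain
  rw [tdeg, tdeg, ← trdeg_add_eq k A (A := B), trdeg_eq_zero (R := A) (A := B), add_zero]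

theorem tdeg_polynomial (D : Type) [CommRing D] [IsDomain D] [Algebra k D] :
    tdeg k D[X] = tdeg k D + 1 := by
  rw [tdeg, tdeg, ← trdeg_add_eq k D (A := D[X]), Polynomial.trdeg_of_isDomain]
  simp

theorem tdeg_mvPolynomial (σ : Type) [Finite σ] :
    tdeg k (MvPolynomial σ k) = Nat.card σ := by
  have := Fintype.ofFinite σ
  rw [tdeg, MvPolynomial.trdeg_of_isDomain]
  simp

/-- The dimension formula for a `k`-algebra `R` of dimension `N`: the height of a prime and the
transcendence degree of its residue domain add up to `N`. -/
def DimFormula (R : Type) [CommRing R] [Algebra k R] (N : ℕ) : Prop :=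
  ∀ (P : Ideal R) [P.IsPrime], P.height + tdeg k (R ⧸ P) = N

variable {k}

/-- The dimension formula passes from `R` to `R[X]`. Let `p` be the contraction of the prime `P` to
`R`. Going down holds for the flat extension `R[X]` of `R`, so `height P` is `height p` plus the
height of `P` in the fibre `(R ⧸ p)[X]`. Either `P` is extended from `p`, and the transcendence
degree grows by one, or `P` has fibre height one and `R[X] ⧸ P` is algebraic over `R ⧸ p`. -/
theorem DimFormula.polynomial {R : Type} [CommRing R] [Algebra k R] [IsNoetherianRing R] {N : ℕ}
    (h : DimFormula k R N) : DimFormula k R[X] (N + 1) := by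
  intro P hP
  let p : Ideal R := P.under R
  have hlo : P.LiesOver p := ⟨rfl⟩
  have hpC : p = P.comap (Polynomial.C : R →+* R[X]) := rfl
  have hp : p.IsPrime := inferInstance
  have hN := h p
  have hht := Ideal.height_eq_height_add_of_liesOver_of_hasGoingDown p P
  have hle : p.map (Polynomial.C : R →+* R[X]) ≤ P := Ideal.map_comap_le
  let e : (R ⧸ p)[X] ≃+* (R[X] ⧸ p.map (Polynomial.C : R →+* R[X])) :=
    Ideal.polynomialQuotientEquivQuotientPolynomial p
  -- The two cases: `P` extended from `p`, or strictly larger than the extension.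
  by_cases hPp : P = p.map (Polynomial.C : R →+* R[X])
  · have h0 : (P.map (Ideal.Quotient.mk <| p.map (algebraMap R R[X]))).height = 0 := by
      have hbot : P.map (Ideal.Quotient.mk <| p.map (algebraMap R R[X])) = ⊥ := by
        rw [Ideal.map_eq_bot_iff_le_ker, Ideal.mk_ker]
        exact hPp.le
      have : Nontrivial (R[X] ⧸ p.map (algebraMap R R[X])) := e.symm.toEquiv.nontrivial
      rw [hbot, Ideal.height_bot]
    have h1 : tdeg k (R[X] ⧸ P) = tdeg k (R ⧸ p) + 1 := by
      rw [← tdeg_polynomial]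
      let e' : (R ⧸ p)[X] ≃ₐ[k] (R[X] ⧸ p.map (Polynomial.C : R →+* R[X])) :=
        AlgEquiv.ofRingEquiv (f := e) (fun x => by
          have hx : algebraMap k (R ⧸ p)[X] x =
              (Polynomial.C (algebraMap k R x) : R[X]).map (Ideal.Quotient.mk p) := by
            rw [Polynomial.map_C]; rfl
          rw [hx, Ideal.polynomialQuotientEquivQuotientPolynomial_map_mk]
          rfl)
      exact tdeg_eq_of_algEquiv k ((Ideal.quotientEquivAlgOfEq k hPp).trans e'.symm)
    rw [hht, h0, h1, add_zero, ← add_assoc, hN]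
    simp
  · have h0 : (P.map (Ideal.Quotient.mk <| p.map (algebraMap R R[X]))).height = 1 := by
      set Q := P.map (Ideal.Quotient.mk <| p.map (algebraMap R R[X])) with hQ
      have hcom : Q.comap (Ideal.Quotient.mk <| p.map (algebraMap R R[X])) = P := by
        rw [hQ, Ideal.comap_map_of_surjective _ Ideal.Quotient.mk_surjective,
          ← RingHom.ker_eq_comap_bot, Ideal.mk_ker]
        exact sup_eq_left.mpr hle
      have hQp : Q.IsPrime :=
        Ideal.map_isPrime_of_surjective Ideal.Quotient.mk_surjective (by rwa [Ideal.mk_ker])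
      rw [← e.height_comap Q]
      have hQ'p : (Q.comap e).IsPrime := inferInstance
      have hmem (f : R[X]) : f.map (Ideal.Quotient.mk p) ∈ Q.comap e ↔ f ∈ P := by
        rw [Ideal.mem_comap, Ideal.polynomialQuotientEquivQuotientPolynomial_map_mk]
        conv_rhs => rw [← hcom]
        rfl
      refine le_antisymm (height_le_one_of_under_eq_bot _ ?_) ?_
      · refine le_antisymm (fun a ha => ?_) bot_le
        obtain ⟨r, rfl⟩ := Ideal.Quotient.mk_surjective a
        have hr : (Polynomial.C r : R[X]) ∈ P := by
          rw [← hmem, Polynomial.map_C]; exact ha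
        exact Ideal.Quotient.eq_zero_iff_mem.mpr (show r ∈ p from hr)
      · rw [Order.one_le_iff_ne_zero, Ne, Ideal.height_eq_zero_iff_eq_bot]
        intro hbot
        refine hPp (le_antisymm (fun f hf => ?_) hle)
        have := (hmem f).mpr hf
        rw [hbot, Ideal.mem_bot] at this
        rw [Ideal.mem_map_C_iff]
        intro i
        have := congrArg (fun g => g.coeff i) this
        simpa [Ideal.Quotient.eq_zero_iff_mem] using this
    have h1 : tdeg k (R ⧸ p) = tdeg k (R[X] ⧸ P) := by
      have : FaithfulSMul (R ⧸ p) (R[X] ⧸ P) := inferInstance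
      have : Algebra.IsAlgebraic (R ⧸ p) (R[X] ⧸ P) := by
        obtain ⟨f, hfP, hfp⟩ : ∃ f ∈ P, f ∉ p.map (Polynomial.C : R →+* R[X]) := by
          by_contra! hcon
          exact hPp (le_antisymm hcon hle)
        -- Every element of `R[X] ⧸ P` is a polynomial over `R ⧸ p` in the class of `X`.
        have key (g : R[X]) : Polynomial.aeval (Ideal.Quotient.mk P Polynomial.X)
            (g.map (Ideal.Quotient.mk p)) =
            Ideal.Quotient.mk P g := by
          induction g using Polynomial.induction_on' with
          | add a b ha hb => simp only [Polynomial.map_add, map_add, ha, hb]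
          | monomial n a =>
            rw [← Polynomial.C_mul_X_pow_eq_monomial]
            simp only [Polynomial.map_mul, Polynomial.map_C, Polynomial.map_pow,
              Polynomial.map_X, map_mul, map_pow, Polynomial.aeval_X, Polynomial.aeval_C]
            rfl
        have hX : IsAlgebraic (R ⧸ p) (Ideal.Quotient.mk P Polynomial.X) := by
          refine ⟨f.map (Ideal.Quotient.mk p), fun h0 => hfp ?_, ?_⟩
          · rw [Ideal.mem_map_C_iff]
            intro i
            have := congrArg (fun g => g.coeff i) h0
            simpa [Ideal.Quotient.eq_zero_iff_mem] using this
          · rw [key, Ideal.Quotient.eq_zero_iff_mem]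
            exact hfP
        refine ⟨fun a => ?_⟩
        obtain ⟨g, rfl⟩ := Ideal.Quotient.mk_surjective a
        rw [← key]
        have hle : Algebra.adjoin (R ⧸ p) {Ideal.Quotient.mk P Polynomial.X} ≤
            Subalgebra.algebraicClosure (R ⧸ p) (R[X] ⧸ P) :=
          Algebra.adjoin_le (Set.singleton_subset_iff.mpr hX)
        exact hle (Polynomial.aeval_mem_adjoin_singleton _ _)
      exact tdeg_eq_of_isAlgebraic k _ _
    rw [hht, h0, ← h1, add_right_comm, hN]
    simp

theorem DimFormula.of_algEquiv {R S : Type} [CommRing R] [CommRing S] [Algebra k R] [Algebra k S]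
    (e : R ≃ₐ[k] S) {N : ℕ} (h : DimFormula k S N) : DimFormula k R N := by
  intro P hP
  let Q : Ideal S := P.comap (e.symm : S →+* R)
  have hQ : Q.IsPrime := inferInstance
  have hPQ : Q = P.map (e : R →+* S) := by
    exact Ideal.comap_symm (I := P) e.toRingEquiv
  rw [← h Q, tdeg_eq_of_algEquiv k (Ideal.quotientEquivAlg P Q e hPQ)]
  congr 1
  exact (RingEquiv.height_comap e.symm.toRingEquiv P).symm

theorem dimFormula_field : DimFormula k k 0 := by
  intro P hP
  have : P = ⊥ := (Ideal.eq_bot_or_top P).resolve_right hP.ne_top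
  subst this
  rw [Ideal.height_bot, tdeg, trdeg_eq_zero]
  simp

theorem dimFormula_mvPolynomial (n : ℕ) : DimFormula k (MvPolynomial (Fin n) k) n := by
  induction n with
  | zero => exact .of_algEquiv (MvPolynomial.isEmptyAlgEquiv k (Fin 0)) dimFormula_field
  | succ n ih => exact .of_algEquiv (MvPolynomial.finSuccEquiv k n) ih.polynomial

/-- Factoring out a nonzero prime of height at most one lowers the transcendence degree of an affine
domain by exactly one. Over a Noether normalization `R` the contraction of `Q` is a nonzero prime,
of height at most one by going down, so the dimension formula in `R` applies. -/
theorem tdeg_quotient_add_one {D : Type} [CommRing D] [IsDomain D] [Algebra k D]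
    [Algebra.FiniteType k D] (Q : Ideal D) [Q.IsPrime] (hQ0 : Q ≠ ⊥) (hQ1 : Q.height ≤ 1) :
    tdeg k (D ⧸ Q) + 1 = tdeg k D := by
  have : IsNoetherianRing D := Algebra.FiniteType.isNoetherianRing k D
  obtain ⟨s, g, hginj, hgint⟩ := exists_integral_inj_algHom_of_fg k D
  let R := MvPolynomial (Fin s) k
  let _ : Algebra R D := g.toRingHom.toAlgebra
  have : IsScalarTower k R D := .of_algebraMap_eq fun x => (g.commutes x).symm
  have : Algebra.IsIntegral R D := ⟨hgint⟩
  have : FaithfulSMul R D := (faithfulSMul_iff_algebraMap_injective R D).mpr hginj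
  have : IsIntegrallyClosed R := inferInstanceAs (IsIntegrallyClosed (MvPolynomial (Fin s) k))
  have : IsDomain R := inferInstanceAs (IsDomain (MvPolynomial (Fin s) k))
  let q : Ideal R := Q.under R
  have hlo : Q.LiesOver q := ⟨rfl⟩
  have hq : q.IsPrime := inferInstance
  have hq0 : q ≠ ⊥ := by
    intro h
    exact hQ0 (Ideal.eq_bot_of_comap_eq_bot (R := R) h)
  have hq1 : q.height = 1 := by
    refine le_antisymm ?_ ?_
    · refine le_trans ?_ hQ1
      rw [Ideal.height_eq_height_add_of_liesOver_of_hasGoingDown q Q]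
      exact le_self_add
    · rw [Order.one_le_iff_ne_zero, Ne, Ideal.height_eq_zero_iff_eq_bot]
      exact hq0
  have h1 := dimFormula_mvPolynomial (k := k) s q
  rw [hq1] at h1
  rw [← tdeg_eq_of_isAlgebraic k (R ⧸ q) (D ⧸ Q), ← tdeg_eq_of_isAlgebraic k R D,
    tdeg_mvPolynomial, add_comm, h1]
  simp

/-- By going up, chains of primes in a Noether normalization lift to the affine domain `D`. -/
theorem tdeg_le_ringKrullDim (D : Type) [CommRing D] [IsDomain D] [Algebra k D]
    [Algebra.FiniteType k D] : (tdeg k D : WithBot ℕ∞) ≤ ringKrullDim D := by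
  obtain ⟨s, g, hginj, hgint⟩ := exists_integral_inj_algHom_of_fg k D
  let R := MvPolynomial (Fin s) k
  let _ : Algebra R D := g.toRingHom.toAlgebra
  have : IsScalarTower k R D := .of_algebraMap_eq fun x => (g.commutes x).symm
  have : Algebra.IsIntegral R D := ⟨hgint⟩
  have : FaithfulSMul R D := (faithfulSMul_iff_algebraMap_injective R D).mpr hginj
  have : IsDomain R := inferInstanceAs (IsDomain (MvPolynomial (Fin s) k))
  have hR : ringKrullDim (MvPolynomial (Fin s) k) = (s : WithBot ℕ∞) := by
    rw [MvPolynomial.ringKrullDim_of_isNoetherianRing, ringKrullDim_eq_zero_of_field]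
    simp
  rw [← tdeg_eq_of_isAlgebraic k R D, tdeg_mvPolynomial]
  simp only [Nat.card_eq_fintype_card, Fintype.card_fin]
  refine le_trans hR.ge (iSup_le fun l => ?_)
  obtain ⟨P, hP, hlo⟩ := (inferInstance : Nonempty (l.head.asIdeal.primesOver D))
  obtain ⟨L, hL, -⟩ := Ideal.exists_ltSeries_of_hasGoingUp l P
  rw [← hL]
  exact Order.LTSeries.length_le_krullDim L

/-- Along a chain of primes above `J` heights increase strictly, starting at no less than `n - d`
and ending at no more than `n`. -/
theorem ringKrullDim_quotient_le_of_height {n d : ℕ} (J : Ideal (MvPolynomial (Fin n) k))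
    (h : ∀ p ∈ J.minimalPrimes, p.height + d = n) :
    ringKrullDim (MvPolynomial (Fin n) k ⧸ J) ≤ d := by
  rw [ringKrullDim_quotient]
  refine iSup_le fun l => ?_
  have hfin (q : PrimeSpectrum (MvPolynomial (Fin n) k)) : q.asIdeal.height ≤ n := by
    rw [← dimFormula_mvPolynomial n q.asIdeal]
    exact le_self_add
  have hmono : StrictMono fun q : PrimeSpectrum.zeroLocus (R := MvPolynomial (Fin n) k) J =>
      (q.1.asIdeal.height).toNat := by
    intro q q' hqq
    have hlt : q.1.asIdeal.height < q'.1.asIdeal.height :=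
      Ideal.height_strict_mono_of_isPrime (show q.1.asIdeal < q'.1.asIdeal from hqq)
    have := (hfin q'.1).trans_lt (ENat.natCast_lt_top n)
    change ENat.toNat _ < ENat.toNat _
    generalize q.1.asIdeal.height = a at *
    generalize q'.1.asIdeal.height = b at *
    lift b to ℕ using this.ne
    lift a to ℕ using (hlt.trans this).ne
    simpa using hlt
  have hlen := LTSeries.head_add_length_le_nat (l.map _ hmono)
  simp only [LTSeries.head_map, LTSeries.last_map] at hlen
  obtain ⟨p, hp, hple⟩ := Ideal.exists_minimalPrimes_le (J := l.head.1.asIdeal)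
    (show J ≤ l.head.1.asIdeal from l.head.2)
  have h1 := h p hp
  have h2 := Ideal.height_mono hple
  have h3 := hfin l.head.1
  have h4 := hfin l.last.1
  generalize p.height = a at *
  generalize l.head.1.asIdeal.height = b at *
  generalize l.last.1.asIdeal.height = c at *
  lift b to ℕ using (h3.trans_lt (ENat.natCast_lt_top n)).ne
  lift c to ℕ using (h4.trans_lt (ENat.natCast_lt_top n)).ne
  lift a to ℕ using (h2.trans_lt (ENat.natCast_lt_top b)).ne
  norm_cast at *
  simp at hlen
  omega

end TranscendenceDegree

end DimensionTheory

/-! ### The degeneration homomorphism -/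

section Toric

variable {n : ℕ} {G : Type} [AddCommGroup G]

/-- The homomorphism `φ : ℂ[∂][t] → ℂ[G × ℤ]` sending `∂^u t^k` to the monomial of exponent
`(a u, ω u + k)`, where `a` is a `G`-grading of the exponents and `ω` an integral weight. Its image
is the coordinate ring of the total space of the degeneration; the parameter `t` is
`Polynomial.X`. -/
def degenHom (a : (Fin n →₀ ℕ) →+ G) (ω : (Fin n →₀ ℕ) →+ ℤ) :
    Polynomial (MvPolynomial (Fin n) ℂ) →ₐ[ℂ] AddMonoidAlgebra ℂ (G × ℤ) :=
  Polynomial.aevalTower (AddMonoidAlgebra.mapDomainAlgHom ℂ ℂ (a.prod ω))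
    (AddMonoidAlgebra.single (0, 1) 1)

variable (a : (Fin n →₀ ℕ) →+ G) (ω : (Fin n →₀ ℕ) →+ ℤ)

theorem degenHom_X : degenHom a ω Polynomial.X = AddMonoidAlgebra.single (0, 1) 1 := by
  simp [degenHom]

theorem degenHom_monomial (u : Fin n →₀ ℕ) (c : ℂ) (k : ℕ) :
    degenHom a ω (Polynomial.C (monomial u c) * Polynomial.X ^ k) =
      AddMonoidAlgebra.single (a u, ω u + k) c := by
  rw [map_mul, map_pow, degenHom_X, AddMonoidAlgebra.single_pow, degenHom,
    Polynomial.aevalTower_C]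
  have : AddMonoidAlgebra.mapDomainAlgHom ℂ ℂ (a.prod ω) (monomial u c) =
      AddMonoidAlgebra.single (a u, ω u) c :=
    AddMonoidAlgebra.mapDomain_single
  rw [this, AddMonoidAlgebra.single_mul_single]
  simp

/-- Setting `t = 0` maps the kernel of `φ` into every ideal `J` that contains `∂^u - ∂^v` for
exponents of equal degree and weight, and `∂^u` whenever some exponent of the same degree has
smaller weight. -/
theorem coeff_zero_mem_of_degenHom_eq_zero (J : Ideal (MvPolynomial (Fin n) ℂ))
    (h₁ : ∀ u v, a u = a v → ω u = ω v → monomial u 1 - monomial v 1 ∈ J)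
    (h₂ : ∀ u v, a u = a v → ω v < ω u → monomial u 1 ∈ J)
    (f : Polynomial (MvPolynomial (Fin n) ℂ)) (hf : degenHom a ω f = 0) :
    Polynomial.constantCoeff f ∈ J := by
  classical
  -- `θ₀` is the class of `∂^u` at `(a u, ω u)`, which by `h₁` does not depend on `u`, and zero
  -- at exponents not of this form.
  let θ₀ : G × ℤ → MvPolynomial (Fin n) ℂ ⧸ J := fun g =>
    if h : ∃ u, (a u, ω u) = g then Ideal.Quotient.mk J (monomial h.choose 1) else 0
  have hθ₀ (u : Fin n →₀ ℕ) : θ₀ (a u, ω u) = Ideal.Quotient.mk J (monomial u 1) := by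
    have h : ∃ v, (a v, ω v) = (a u, ω u) := ⟨u, rfl⟩
    have hs := h.choose_spec
    simp only [θ₀, dif_pos h]
    rw [Ideal.Quotient.mk_eq_mk_iff_sub_mem]
    exact h₁ _ _ (congrArg Prod.fst hs) (congrArg Prod.snd hs)
  -- If `(a u, ω u + k + 1) = (a v, ω v)`, then `u` has smaller weight than `v`, so `h₂` applies.
  have hθ₀' (u : Fin n →₀ ℕ) (k : ℕ) : θ₀ (a u, ω u + (k + 1 : ℕ)) = 0 := by
    by_cases h : ∃ v, (a v, ω v) = (a u, ω u + (k + 1 : ℕ))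
    · have hs := h.choose_spec
      simp only [θ₀, dif_pos h]
      rw [Ideal.Quotient.eq_zero_iff_mem]
      refine h₂ _ u (congrArg Prod.fst hs) ?_
      have := congrArg Prod.snd hs
      simp only at this
      omega
    · simp only [θ₀, dif_neg h]
  let θ : AddMonoidAlgebra ℂ (G × ℤ) →+ MvPolynomial (Fin n) ℂ ⧸ J :=
    (Finsupp.linearCombination ℂ θ₀).toAddMonoidHom.comp
      AddMonoidAlgebra.coeffAddEquiv.toAddMonoidHom
  have hθ (g : G × ℤ) (c : ℂ) : θ (AddMonoidAlgebra.single g c) = c • θ₀ g :=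
    Finsupp.linearCombination_single ℂ c g
  have key (f : Polynomial (MvPolynomial (Fin n) ℂ)) :
      θ (degenHom a ω f) = Ideal.Quotient.mk J (Polynomial.constantCoeff f) := by
    induction f using Polynomial.induction_on' with
    | add p q hp hq => simp only [map_add, hp, hq]
    | monomial k p =>
      rw [← Polynomial.C_mul_X_pow_eq_monomial]
      induction p using MvPolynomial.induction_on' with
      | add p q hp hq => simp only [map_add, add_mul, hp, hq]
      | monomial u c =>
        rw [degenHom_monomial, hθ]
        cases k with
        | zero =>
          have hc : monomial u c = c • monomial u (1 : ℂ) := by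
            rw [MvPolynomial.smul_monomial, smul_eq_mul, mul_one]
          simp only [Nat.cast_zero, add_zero, hθ₀, pow_zero, mul_one,
            Polynomial.constantCoeff_apply, Polynomial.coeff_C_zero]
          rw [hc]
          rfl
        | succ k =>
          rw [hθ₀', smul_zero]
          simp
  rw [← Ideal.Quotient.eq_zero_iff_mem, ← key, hf, map_zero]


/-- The homogenization `∑ c_u ∂^u t^(M - ω u)` of `f = ∑ c_u ∂^u`. It is meaningful when `M` bounds
the weights of all terms of `f`; otherwise the exponent is truncated to zero. -/
def homogenize (f : MvPolynomial (Fin n) ℂ) (M : ℤ) : Polynomial (MvPolynomial (Fin n) ℂ) :=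
  ∑ u ∈ f.support, Polynomial.C (monomial u (f.coeff u)) * Polynomial.X ^ (M - ω u).toNat

theorem mapDomain_finset_sum {M N ι : Type} (φ : M → N) (s : Finset ι)
    (F : ι → AddMonoidAlgebra ℂ M) :
    AddMonoidAlgebra.mapDomain φ (∑ i ∈ s, F i) =
      ∑ i ∈ s, AddMonoidAlgebra.mapDomain φ (F i) :=
  map_sum (⟨⟨AddMonoidAlgebra.mapDomain φ, AddMonoidAlgebra.mapDomain_zero φ⟩,
    AddMonoidAlgebra.mapDomain_add φ⟩ : AddMonoidAlgebra ℂ M →+ AddMonoidAlgebra ℂ N) F s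

/-- If `f` vanishes in `ℂ[G]`, then its homogenization lies in the kernel of `φ`: all terms of the
latter have weight `M`, so its image is that of `f` in `ℂ[G]`, placed in weight `M`. -/
theorem degenHom_homogenize (f : MvPolynomial (Fin n) ℂ) (M : ℤ)
    (hM : ∀ u ∈ f.support, ω u ≤ M) (hf : AddMonoidAlgebra.mapDomain a f = 0) :
    degenHom a ω (homogenize ω f M) = 0 := by
  have h : degenHom a ω (homogenize ω f M) =
      AddMonoidAlgebra.mapDomain (fun b : G => (b, M)) (AddMonoidAlgebra.mapDomain a f) := by
    conv_rhs => rw [f.as_sum]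
    rw [homogenize, map_sum, mapDomain_finset_sum, mapDomain_finset_sum]
    refine Finset.sum_congr rfl fun u hu => ?_
    rw [degenHom_monomial]
    have : monomial u (f.coeff u) = AddMonoidAlgebra.single u (f.coeff u) := rfl
    rw [this, AddMonoidAlgebra.mapDomain_single, AddMonoidAlgebra.mapDomain_single]
    have := hM u hu
    congr 2
    omega
  rw [h, hf, AddMonoidAlgebra.mapDomain_zero]

theorem constantCoeff_homogenize (f : MvPolynomial (Fin n) ℂ) (M : ℤ)
    (hM : ∀ u ∈ f.support, ω u ≤ M) :
    Polynomial.constantCoeff (homogenize ω f M) =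
      ∑ u ∈ f.support with ω u = M, monomial u (f.coeff u) := by
  rw [homogenize, map_sum, Finset.sum_filter]
  refine Finset.sum_congr rfl fun u hu => ?_
  have := hM u hu
  rw [map_mul, map_pow, Polynomial.constantCoeff_apply, Polynomial.constantCoeff_apply,
    Polynomial.coeff_C_zero, Polynomial.coeff_X_zero]
  split_ifs with h
  · simp [h]
  · rw [zero_pow (by omega), mul_zero]

/-! ### Weights, degrees and initial forms -/

/-- Multiplying `L` by a common denominator gives an integral weight inducing the same order. -/
theorem exists_int_weight (L : Fin n → ℚ) :
    ∃ ω : (Fin n →₀ ℕ) →+ ℤ, ∀ u v, ω u ≤ ω v ↔ wt L u ≤ wt L v := by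
  let N : ℕ := ∏ j, (L j).den
  have hN : (0 : ℚ) < N := by
    exact_mod_cast Finset.prod_pos fun j _ => (L j).den_pos
  have hz (j : Fin n) : ∃ z : ℤ, (z : ℚ) = N * L j := by
    obtain ⟨m, hm⟩ : (L j).den ∣ N := Finset.dvd_prod_of_mem _ (Finset.mem_univ j)
    refine ⟨m * (L j).num, ?_⟩
    rw [hm]
    push_cast
    rw [mul_assoc, mul_left_comm, mul_comm ((L j).den : ℚ), Rat.mul_den_eq_num]
  choose z hz using hz
  let ω : (Fin n →₀ ℕ) →+ ℤ :=
    { toFun := fun u => ∑ j, z j * (u j : ℤ)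
      map_zero' := by simp
      map_add' := fun u v => by simp [mul_add, Finset.sum_add_distrib] }
  have hω (u : Fin n →₀ ℕ) : (ω u : ℚ) = N * wt L u := by
    simp only [ω, wt, AddMonoidHom.coe_mk, ZeroHom.coe_mk]
    push_cast
    rw [Finset.mul_sum]
    exact Finset.sum_congr rfl fun j _ => by rw [hz, mul_assoc]
  refine ⟨ω, fun u v => ?_⟩
  rw [← Int.cast_le (R := ℚ), hω, hω, mul_le_mul_iff_of_pos_left hN]

/-- The `ℤ^d`-degree `u ↦ A u` of exponent vectors. -/
def degHom {d n : ℕ} (A : Matrix (Fin d) (Fin n) ℤ) : (Fin n →₀ ℕ) →+ (Fin d → ℤ) where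
  toFun u := A.mulVec (fun j => (u j : ℤ))
  map_zero' := A.mulVec_zero
  map_add' u v := by
    rw [← Matrix.mulVec_add]
    congr 1

theorem degHom_single {d n : ℕ} (A : Matrix (Fin d) (Fin n) ℤ) (j : Fin n) :
    degHom A (Finsupp.single j 1) = fun i => A i j := by
  have : (fun i => ((Finsupp.single j 1 : Fin n →₀ ℕ) i : ℤ)) = Pi.single j 1 := by
    ext i
    by_cases h : j = i
    · subst h; simp
    · simp [Ne.symm h]
  change A.mulVec (fun i => ((Finsupp.single j 1 : Fin n →₀ ℕ) i : ℤ)) = _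
  rw [this, Matrix.mulVec_single_one]
  rfl

/-- A positive grading: if `A u = 0` and `u j > 0`, then `-a_j = A (u - e_j)` lies in `ℕA`, which
contradicts pointedness because `a_j ≠ 0`. -/
theorem degHom_eq_zero {d n : ℕ} {A : Matrix (Fin d) (Fin n) ℤ}
    (hcols : ∀ j, (fun i => A i j) ≠ 0) (hpointed : IsPointed A) {u : Fin n →₀ ℕ}
    (hu : degHom A u = 0) : u = 0 := by
  have hmem (w : Fin n →₀ ℕ) : degHom A w ∈ AddSubmonoid.closure (cols A) := by
    induction w using Finsupp.induction_linear with
    | zero => rw [map_zero]; exact zero_mem _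
    | add v w hv hw => rw [map_add]; exact add_mem hv hw
    | single j m =>
      have : Finsupp.single j m = m • Finsupp.single j 1 := by simp
      rw [this, map_nsmul, degHom_single]
      exact nsmul_mem (AddSubmonoid.subset_closure (Set.mem_range_self j)) m
  ext j
  by_contra hj
  have hle : Finsupp.single j 1 ≤ u :=
    Finsupp.single_le_iff.mpr (Nat.one_le_iff_ne_zero.mpr hj)
  rw [← add_tsub_cancel_of_le hle, map_add, degHom_single] at hu
  refine hcols j (hpointed _ (AddSubmonoid.subset_closure (Set.mem_range_self j)) ?_)
  rw [neg_eq_of_add_eq_zero_right hu]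
  exact hmem _

/-- The toric ideal is contained in the kernel of `∂^u ↦ t^(A u)`. -/
theorem mapDomain_eq_zero_of_mem_toricIdeal {d n : ℕ} (A : Matrix (Fin d) (Fin n) ℤ)
    {f : MvPolynomial (Fin n) ℂ} (hf : f ∈ toricIdeal A) :
    AddMonoidAlgebra.mapDomain (degHom A) f = 0 := by
  have h : toricIdeal A ≤ RingHom.ker (AddMonoidAlgebra.mapDomainAlgHom ℂ ℂ (degHom A)) := by
    rw [toricIdeal, Ideal.span_le]
    rintro _ ⟨u, v, huv, rfl⟩
    rw [SetLike.mem_coe, RingHom.mem_ker, map_sub, sub_eq_zero]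
    refine (AddMonoidAlgebra.mapDomain_single).trans
      (Eq.trans ?_ (AddMonoidAlgebra.mapDomain_single).symm)
    exact congrArg (fun g => AddMonoidAlgebra.single g (1 : ℂ)) huv
  exact h hf

section Initial

variable {L : Fin n → ℚ} {ω : (Fin n →₀ ℕ) →+ ℤ}

/-- In terms of an integral weight, the initial form collects the terms of maximal weight `M`. -/
theorem initialForm_eq (hω : ∀ u v, ω u ≤ ω v ↔ wt L u ≤ wt L v)
    {f : MvPolynomial (Fin n) ℂ} (hf : f ≠ 0) :
    ∃ M, (∀ u ∈ f.support, ω u ≤ M) ∧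
      initialForm L f = ∑ u ∈ f.support with ω u = M, monomial u (f.coeff u) := by
  obtain ⟨w, hw, hmax⟩ := f.support.exists_max_image ω (MvPolynomial.support_nonempty.mpr hf)
  refine ⟨ω w, hmax, ?_⟩
  rw [initialForm]
  refine Finset.sum_congr (Finset.filter_congr fun u hu => ?_) fun _ _ => rfl
  simp only [← hω]
  exact ⟨fun h => le_antisymm (hmax u hu) (h w hw), fun h v hv => h ▸ hmax v hv⟩

theorem support_binomial {u v : Fin n →₀ ℕ} (huv : u ≠ v) :
    (monomial u 1 - monomial v 1 : MvPolynomial (Fin n) ℂ).support = {u, v} := by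
  classical
  ext w
  rw [MvPolynomial.mem_support_iff, coeff_sub, coeff_monomial, coeff_monomial]
  by_cases h : u = w
  · subst h
    simp [huv.symm]
  · by_cases h' : v = w
    · subst h'
      simp [huv]
    · simp [h, h', Ne.symm h, Ne.symm h']

theorem initialForm_binomial_mem {d : ℕ} {A : Matrix (Fin d) (Fin n) ℤ} {u v : Fin n →₀ ℕ}
    (huv : u ≠ v) (h : degHom A u = degHom A v) :
    initialForm L (monomial u 1 - monomial v 1) ∈ initialIdeal L (toricIdeal A) := by
  refine Ideal.subset_span ⟨_, Ideal.subset_span ⟨u, v, h, rfl⟩, fun h0 => ?_, rfl⟩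
  have := support_binomial huv
  rw [h0] at this
  simpa using this.symm

theorem monomial_sub_mem_initialIdeal {d : ℕ} {A : Matrix (Fin d) (Fin n) ℤ}
    (hω : ∀ u v, ω u ≤ ω v ↔ wt L u ≤ wt L v) (u v : Fin n →₀ ℕ)
    (h : degHom A u = degHom A v) (hw : ω u = ω v) :
    monomial u 1 - monomial v 1 ∈ initialIdeal L (toricIdeal A) := by
  by_cases huv : u = v
  · rw [huv, sub_self]; exact zero_mem _
  have hmem := initialForm_binomial_mem (L := L) huv h
  rw [initialForm, Finset.filter_true_of_mem, ← MvPolynomial.as_sum] at hmem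
  · exact hmem
  · rw [support_binomial huv]
    simp [← hω, hw]

theorem monomial_mem_initialIdeal {d : ℕ} {A : Matrix (Fin d) (Fin n) ℤ}
    (hω : ∀ u v, ω u ≤ ω v ↔ wt L u ≤ wt L v) (u v : Fin n →₀ ℕ)
    (h : degHom A u = degHom A v) (hw : ω v < ω u) :
    monomial u 1 ∈ initialIdeal L (toricIdeal A) := by
  classical
  have huv : u ≠ v := by rintro rfl; exact lt_irrefl _ hw
  have hmem := initialForm_binomial_mem (L := L) huv h
  have hfil : ({w ∈ ({u, v} : Finset (Fin n →₀ ℕ)) |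
      ∀ w' ∈ ({u, v} : Finset (Fin n →₀ ℕ)), wt L w' ≤ wt L w} : Finset _) = {u} := by
    ext w
    simp only [← hω, Finset.mem_filter, Finset.mem_insert, Finset.mem_singleton]
    constructor
    · rintro ⟨rfl | rfl, hmax⟩
      · rfl
      · exact absurd (hmax u (Or.inl rfl)) (not_le.mpr hw)
    · rintro rfl
      refine ⟨Or.inl rfl, ?_⟩
      rintro _ (rfl | rfl)
      exacts [le_rfl, hw.le]
  rw [initialForm, support_binomial huv, hfil, Finset.sum_singleton] at hmem
  simpa [coeff_monomial, huv.symm] using hmem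

/-! ### The initial ideal as a special fibre -/

/-- With `D` the image of `φ`, the preimage of the initial ideal under `t ↦ 0` is the preimage of
the principal ideal of `D` generated by the image of `t`. -/
theorem comap_initialIdeal {d : ℕ} (A : Matrix (Fin d) (Fin n) ℤ)
    (hω : ∀ u v, ω u ≤ ω v ↔ wt L u ≤ wt L v) :
    (initialIdeal L (toricIdeal A)).comap Polynomial.constantCoeff =
      (Ideal.span {(degenHom (degHom A) ω).rangeRestrict Polynomial.X}).comap
        (degenHom (degHom A) ω).rangeRestrict := by
  set π := (degenHom (degHom A) ω).rangeRestrict with hπ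
  have hker (f : Polynomial (MvPolynomial (Fin n) ℂ)) :
      π f = 0 ↔ degenHom (degHom A) ω f = 0 := Subtype.ext_iff
  set J := initialIdeal L (toricIdeal A) with hJ
  have hX (f : Polynomial (MvPolynomial (Fin n) ℂ)) :
      ∃ g, f = Polynomial.C (Polynomial.constantCoeff f) + Polynomial.X * g :=
    ⟨f.divX, by rw [add_comm]; exact (Polynomial.X_mul_divX_add f).symm⟩
  apply le_antisymm
  · -- The homogenization of `f ∈ I_A` has constant term `in_L f` and maps to zero in `D`, so
    -- `in_L f` is a multiple of `t` in `D`.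
    have hJle : J ≤ (Ideal.span {π Polynomial.X}).comap
        ((π : _ →+* _).comp Polynomial.C) := by
      rw [hJ, initialIdeal, Ideal.span_le]
      rintro _ ⟨f, hf, hf0, rfl⟩
      obtain ⟨M, hM, hin⟩ := initialForm_eq hω hf0
      obtain ⟨g, hg⟩ := hX (homogenize ω f M)
      have h0 : π (homogenize ω f M) = 0 :=
        (hker _).mpr
          (degenHom_homogenize _ ω f M hM (mapDomain_eq_zero_of_mem_toricIdeal A hf))
      rw [constantCoeff_homogenize ω f M hM, ← hin] at hg
      rw [hg, map_add, map_mul] at h0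
      rw [SetLike.mem_coe, Ideal.mem_comap, RingHom.comp_apply, RingHom.coe_coe,
        eq_neg_of_add_eq_zero_left h0, neg_mem_iff]
      exact Ideal.mul_mem_right _ _ (Ideal.mem_span_singleton_self _)
    intro f hf
    obtain ⟨g, hg⟩ := hX f
    rw [Ideal.mem_comap, hg, map_add, map_mul]
    exact add_mem (hJle hf) (Ideal.mul_mem_right _ _ (Ideal.mem_span_singleton_self _))
  · -- If `f` and `b t` agree in `D`, then `f - b t` is in the kernel of `φ`, and its constant
    -- term is that of `f`.
    intro f hf
    rw [Ideal.mem_comap, Ideal.mem_span_singleton'] at hf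
    obtain ⟨b, hb⟩ := hf
    obtain ⟨b, rfl⟩ := (degenHom (degHom A) ω).rangeRestrict_surjective b
    rw [← hπ, ← map_mul, eq_comm, ← sub_eq_zero, ← map_sub, hker] at hb
    have := coeff_zero_mem_of_degenHom_eq_zero (degHom A) ω J
      (monomial_sub_mem_initialIdeal hω) (monomial_mem_initialIdeal hω) _ hb
    simpa using this

/-! ### Transcendence degree of the total space -/

section Transcendence

/-- A group algebra `k[G]` is algebraic over any subalgebra containing the monomials of a
generating set of `G`. -/
theorem isAlgebraic_of_closure {k G B : Type} [Field k] [AddCommGroup G]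
    [IsDomain (AddMonoidAlgebra k G)] [CommRing B] [IsDomain B] [Algebra k B]
    [Algebra B (AddMonoidAlgebra k G)] [IsScalarTower k B (AddMonoidAlgebra k G)]
    [FaithfulSMul B (AddMonoidAlgebra k G)] (s : Set G) (hs : AddSubgroup.closure s = ⊤)
    (hsB : ∀ g ∈ s, AddMonoidAlgebra.single g 1 ∈
      (algebraMap B (AddMonoidAlgebra k G)).range) :
    Algebra.IsAlgebraic B (AddMonoidAlgebra k G) := by
  have hmon (g : G) : IsAlgebraic B (AddMonoidAlgebra.single g 1 : AddMonoidAlgebra k G) := by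
    have hg : g ∈ AddSubgroup.closure s := hs ▸ AddSubgroup.mem_top g
    induction hg using AddSubgroup.closure_induction with
    | mem g hg =>
      obtain ⟨b, hb⟩ := hsB g hg
      rw [← hb]
      exact isAlgebraic_algebraMap b
    | zero => exact isAlgebraic_one
    | add g h _ _ hg hh =>
      have := hg.mul hh
      rwa [AddMonoidAlgebra.single_mul_single, one_mul] at this
    | neg g _ hg =>
      let _ : Invertible (AddMonoidAlgebra.single g 1 : AddMonoidAlgebra k G) :=
        ⟨AddMonoidAlgebra.single (-g) 1, by
          rw [AddMonoidAlgebra.single_mul_single, neg_add_cancel, one_mul]; rfl, by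
          rw [AddMonoidAlgebra.single_mul_single, add_neg_cancel, one_mul]; rfl⟩
      exact hg.invOf
  refine ⟨fun x => ?_⟩
  induction x using AddMonoidAlgebra.induction_linear with
  | zero => exact isAlgebraic_zero
  | add x y hx hy => exact hx.add hy
  | single g c =>
    have h : AddMonoidAlgebra.single g c =
        algebraMap B (AddMonoidAlgebra k G) (algebraMap k B c) * AddMonoidAlgebra.single g 1 := by
      rw [← IsScalarTower.algebraMap_apply, ← Algebra.smul_def, AddMonoidAlgebra.smul_single,
        smul_eq_mul, mul_one]
    rw [h]
    exact (isAlgebraic_algebraMap _).mul (hmon g)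

/-- `ℂ[ℤ^d × ℤ]` has transcendence degree `d + 1`, being algebraic over the polynomial ring
`ℂ[ℕ^d × ℕ]`. -/
theorem tdeg_groupAlgebra (d : ℕ) :
    tdeg ℂ (AddMonoidAlgebra ℂ ((Fin d → ℤ) × ℤ)) = (d + 1 : ℕ) := by
  let ι : (Option (Fin d) →₀ ℕ) →+ (Fin d → ℤ) × ℤ :=
    { toFun := fun u => (fun i => (u (some i) : ℤ), (u none : ℤ))
      map_zero' := by ext <;> simp
      map_add' := fun u v => by ext <;> simp }
  have hι : Function.Injective ι := by
    intro u v h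
    ext (_ | i)
    · exact Int.natCast_inj.mp (congrArg Prod.snd h)
    · exact Int.natCast_inj.mp (congrFun (congrArg Prod.fst h) i)
  let B := MvPolynomial (Option (Fin d)) ℂ
  let φ : B →ₐ[ℂ] AddMonoidAlgebra ℂ ((Fin d → ℤ) × ℤ) :=
    AddMonoidAlgebra.mapDomainAlgHom ℂ ℂ ι
  have hφ : Function.Injective φ := AddMonoidAlgebra.mapDomain_injective hι
  let _ : Algebra B (AddMonoidAlgebra ℂ ((Fin d → ℤ) × ℤ)) := φ.toRingHom.toAlgebra
  have : IsScalarTower ℂ B (AddMonoidAlgebra ℂ ((Fin d → ℤ) × ℤ)) :=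
    .of_algebraMap_eq fun x => (φ.commutes x).symm
  have : FaithfulSMul B (AddMonoidAlgebra ℂ ((Fin d → ℤ) × ℤ)) :=
    (faithfulSMul_iff_algebraMap_injective _ _).mpr hφ
  have : IsDomain B := inferInstanceAs (IsDomain (MvPolynomial (Option (Fin d)) ℂ))
  have : Algebra.IsAlgebraic B (AddMonoidAlgebra ℂ ((Fin d → ℤ) × ℤ)) := by
    refine isAlgebraic_of_closure (Set.range ι) ?_ ?_
    · rw [eq_top_iff]
      rintro ⟨x, y⟩ -
      -- `(x, y)` is the difference of its positive part `u` and its negative part `v`.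
      let u : Option (Fin d) →₀ ℕ :=
        Finsupp.equivFunOnFinite.symm (fun o => o.elim y.toNat fun i => (x i).toNat)
      let v : Option (Fin d) →₀ ℕ :=
        Finsupp.equivFunOnFinite.symm (fun o => o.elim (-y).toNat fun i => (-x i).toNat)
      have : (x, y) = ι u - ι v := by
        ext i
        · change x i = ((x i).toNat : ℤ) - ((-x i).toNat : ℤ)
          omega
        · change y = (y.toNat : ℤ) - ((-y).toNat : ℤ)
          omega
      rw [this]
      exact sub_mem (AddSubgroup.subset_closure ⟨u, rfl⟩) (AddSubgroup.subset_closure ⟨v, rfl⟩)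
    · rintro _ ⟨u, rfl⟩
      exact ⟨monomial u 1, AddMonoidAlgebra.mapDomain_single⟩
  rw [← tdeg_eq_of_isAlgebraic ℂ B, tdeg_mvPolynomial]
  simp

end Transcendence

/-- The image of `φ` contains the monomials of exponents `(a_j, ω_j)` and `(0, 1)`, which generate
`ℤ^d × ℤ` because `ℤA = ℤ^d`. -/
theorem tdeg_degen {d : ℕ} (A : Matrix (Fin d) (Fin n) ℤ)
    (hZA : AddSubgroup.closure (cols A) = ⊤) (ω : (Fin n →₀ ℕ) →+ ℤ) :
    tdeg ℂ (degenHom (degHom A) ω).range = (d + 1 : ℕ) := by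
  have halg : Algebra.IsAlgebraic (degenHom (degHom A) ω).range
      (AddMonoidAlgebra ℂ ((Fin d → ℤ) × ℤ)) := by
    let e : Fin n → Fin n →₀ ℕ := fun j => Finsupp.single j 1
    have hdeg (j : Fin n) : degHom A (e j) = fun i => A i j := degHom_single A j
    let s : Set ((Fin d → ℤ) × ℤ) := insert (0, 1) (Set.range fun j => (degHom A (e j), ω (e j)))
    refine isAlgebraic_of_closure s ?_ ?_
    · have h01 (m : ℤ) : ((0, m) : (Fin d → ℤ) × ℤ) ∈ AddSubgroup.closure s := by
        have := zsmul_mem (AddSubgroup.subset_closure (Set.mem_insert (0, 1) _) :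
          ((0, 1) : (Fin d → ℤ) × ℤ) ∈ AddSubgroup.closure s) m
        simpa using this
      have hx (x : Fin d → ℤ) : (x, 0) ∈ AddSubgroup.closure s := by
        have hxc : x ∈ AddSubgroup.closure (cols A) := hZA ▸ AddSubgroup.mem_top x
        induction hxc using AddSubgroup.closure_induction with
        | mem x hx =>
          obtain ⟨j, rfl⟩ := hx
          have := sub_mem (AddSubgroup.subset_closure (Or.inr ⟨j, rfl⟩) :
            (degHom A (e j), ω (e j)) ∈ AddSubgroup.closure s) (h01 (ω (e j)))
          simpa [hdeg] using this
        | zero => exact zero_mem _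
        | add x y _ _ hx hy => simpa using add_mem hx hy
        | neg x _ hx => simpa using neg_mem hx
      rw [eq_top_iff]
      rintro ⟨x, y⟩ -
      simpa using add_mem (hx x) (h01 y)
    · rintro _ (rfl | ⟨j, rfl⟩)
      · exact ⟨⟨_, _, degenHom_X (degHom A) ω⟩, rfl⟩
      · refine ⟨⟨_, Polynomial.C (monomial (e j) 1) * Polynomial.X ^ 0, ?_⟩, rfl⟩
        refine (degenHom_monomial (degHom A) ω (e j) 1 0).trans ?_
        simp
  rw [tdeg_eq_of_isAlgebraic ℂ _ (AddMonoidAlgebra ℂ ((Fin d → ℤ) × ℤ)), tdeg_groupAlgebra]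

/-! ### Minimal primes of the initial ideal -/

/-- Every element of the initial ideal has zero constant term: no nonzero exponent has degree
zero, so the binomials of the toric ideal have zero constant term, and initial forms inherit
this. -/
theorem initialIdeal_ne_top {d : ℕ} {A : Matrix (Fin d) (Fin n) ℤ}
    (hcols : ∀ j, (fun i => A i j) ≠ 0) (hpointed : IsPointed A) :
    initialIdeal L (toricIdeal A) ≠ ⊤ := by
  have htoric : toricIdeal A ≤ RingHom.ker (constantCoeff : MvPolynomial (Fin n) ℂ →+* ℂ) := by
    rw [toricIdeal, Ideal.span_le]
    rintro _ ⟨u, v, huv, rfl⟩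
    have huv' : degHom A u = degHom A v := huv
    have hiff : u = 0 ↔ v = 0 := by
      constructor
      · rintro rfl
        exact degHom_eq_zero hcols hpointed (by rw [← huv', map_zero])
      · rintro rfl
        exact degHom_eq_zero hcols hpointed (by rw [huv', map_zero])
    rw [SetLike.mem_coe, RingHom.mem_ker, map_sub, constantCoeff_monomial,
      constantCoeff_monomial]
    simp only [hiff, sub_self]
  have hle : initialIdeal L (toricIdeal A) ≤
      RingHom.ker (constantCoeff : MvPolynomial (Fin n) ℂ →+* ℂ) := by
    rw [initialIdeal, Ideal.span_le]
    rintro _ ⟨f, hf, -, rfl⟩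
    have hf0 : f.coeff 0 = 0 := htoric hf
    rw [SetLike.mem_coe, RingHom.mem_ker, initialForm, map_sum]
    refine Finset.sum_eq_zero fun u _ => ?_
    rw [constantCoeff_monomial]
    split_ifs with h
    · rw [h, hf0]
    · rfl
  intro htop
  rw [htop] at hle
  have h1 := hle (Submodule.mem_top (x := 1))
  rw [RingHom.mem_ker, map_one] at h1
  exact one_ne_zero h1

/-- A minimal prime `p` of the initial ideal has `S ⧸ p ≅ D ⧸ Q` for a minimal prime `Q` of the
principal ideal generated by the image of `t` in `D`, hence transcendence degree `d`. -/
theorem height_add_of_mem_minimalPrimes {d : ℕ} (A : Matrix (Fin d) (Fin n) ℤ)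
    (hZA : AddSubgroup.closure (cols A) = ⊤)
    (p : Ideal (MvPolynomial (Fin n) ℂ)) (hp : p ∈ (initialIdeal L (toricIdeal A)).minimalPrimes) :
    tdeg ℂ (MvPolynomial (Fin n) ℂ ⧸ p) = d ∧ p.height + d = n := by
  obtain ⟨ω, hω⟩ := exists_int_weight L
  have hpp : p.IsPrime := hp.1.1
  let π := (degenHom (degHom A) ω).rangeRestrict
  have hπ : Function.Surjective π := (degenHom (degHom A) ω).rangeRestrict_surjective
  have hε : Function.Surjective
      (Polynomial.constantCoeff : Polynomial (MvPolynomial (Fin n) ℂ) →+* _) :=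
    fun a => ⟨Polynomial.C a, by simp⟩
  have h1 : p.comap Polynomial.constantCoeff ∈
      ((Ideal.span {π Polynomial.X}).comap π.toRingHom).minimalPrimes := by
    have := comap_initialIdeal A hω
    change _ = (Ideal.span {π Polynomial.X}).comap π.toRingHom at this
    rw [← this, Ideal.comap_minimalPrimes_eq_of_surjective hε]
    exact ⟨p, hp, rfl⟩
  rw [Ideal.comap_minimalPrimes_eq_of_surjective (f := π.toRingHom) hπ] at h1
  obtain ⟨Q, hQ, hQp⟩ := h1
  have hQprime : Q.IsPrime := hQ.1.1
  have hft : Algebra.FiniteType ℂ (degenHom (degHom A) ω).range :=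
    Algebra.FiniteType.of_surjective π hπ
  have : IsNoetherianRing (degenHom (degHom A) ω).range :=
    Algebra.FiniteType.isNoetherianRing ℂ _
  have hQ1 : Q.height ≤ 1 := Ideal.height_le_one_of_isPrincipal_of_mem_minimalPrimes _ _ hQ
  have hQ0 : Q ≠ ⊥ := by
    rintro rfl
    have : π Polynomial.X ∈ (⊥ : Ideal _) := hQ.1.2 (Ideal.mem_span_singleton_self _)
    have h0 := congrArg Subtype.val ((Ideal.mem_bot).mp this)
    have h0' : degenHom (degHom A) ω Polynomial.X = 0 := h0
    rw [degenHom_X, AddMonoidAlgebra.single_eq_zero] at h0'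
    exact one_ne_zero h0'
  have ht := tdeg_quotient_add_one (k := ℂ) Q hQ0 hQ1
  rw [tdeg_degen A hZA ω] at ht
  -- Both `S ⧸ p` and `D ⧸ Q` are quotients of `S[t]` by the same ideal.
  have hd : tdeg ℂ (MvPolynomial (Fin n) ℂ ⧸ p) = d := by
    let f₁ : Polynomial (MvPolynomial (Fin n) ℂ) →ₐ[ℂ] MvPolynomial (Fin n) ℂ ⧸ p :=
      (Ideal.Quotient.mkₐ ℂ p).comp (Polynomial.aevalTower (AlgHom.id ℂ _) 0)
    let f₂ : Polynomial (MvPolynomial (Fin n) ℂ) →ₐ[ℂ] (degenHom (degHom A) ω).range ⧸ Q :=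
      (Ideal.Quotient.mkₐ ℂ Q).comp π
    have hf₁ : Function.Surjective f₁ := by
      intro x
      obtain ⟨x, rfl⟩ := Ideal.Quotient.mk_surjective x
      exact ⟨Polynomial.C x, by simp [f₁]⟩
    have hf₂ : Function.Surjective f₂ := Ideal.Quotient.mk_surjective.comp hπ
    have hker : RingHom.ker f₁ = RingHom.ker f₂ := by
      ext x
      have h2 : x ∈ RingHom.ker f₂ ↔ x ∈ Q.comap π.toRingHom := by
        rw [RingHom.mem_ker]
        exact Ideal.Quotient.eq_zero_iff_mem
      have h3 : Polynomial.aevalTower (AlgHom.id ℂ (MvPolynomial (Fin n) ℂ)) 0 x =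
          Polynomial.constantCoeff x := by
        rw [Polynomial.constantCoeff_apply, Polynomial.coeff_zero_eq_eval_zero]
        rfl
      rw [h2, hQp, RingHom.mem_ker, Ideal.mem_comap, ← h3]
      exact Ideal.Quotient.eq_zero_iff_mem
    have e := ((Ideal.quotientKerAlgEquivOfSurjective hf₁).symm.trans
      (Ideal.quotientEquivAlgOfEq ℂ hker)).trans (Ideal.quotientKerAlgEquivOfSurjective hf₂)
    rw [tdeg_eq_of_algEquiv ℂ e]
    generalize tdeg ℂ ((degenHom (degHom A) ω).range ⧸ Q) = t at ht
    push_cast at ht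
    exact (ENat.add_left_injective_of_ne_top ENat.one_ne_top) ht
  refine ⟨hd, ?_⟩
  rw [← hd]
  exact dimFormula_mvPolynomial n p

end Initial

end Toric

/-- Every minimal prime of `in_L(I_A)` in `ℂ[∂₁,…,∂ₙ]` has height `n - d`; in
particular `dim ℂ[∂]/in_L(I_A) = d`. -/
theorem stmt3 {d n : ℕ} (A : Matrix (Fin d) (Fin n) ℤ)
    (hrank : A.rank = d)
    (hcols : ∀ j, (fun i => A i j) ≠ 0)
    (hpointed : IsPointed A)
    (hZA : AddSubgroup.closure (cols A) = ⊤)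
    (L : Fin n → ℚ) :
    (∀ p ∈ (initialIdeal L (toricIdeal A)).minimalPrimes, ∀ (hp : p.IsPrime),
      Order.height (⟨p, hp⟩ : PrimeSpectrum (MvPolynomial (Fin n) ℂ)) = ((n - d : ℕ) : ℕ∞)) ∧
    ringKrullDim (MvPolynomial (Fin n) ℂ ⧸ initialIdeal L (toricIdeal A)) =
      (d : WithBot ℕ∞) := by
  have key := height_add_of_mem_minimalPrimes (L := L) A hZA
  refine ⟨fun p hpm hp => ?_, le_antisymm ?_ ?_⟩
  · rw [← PrimeSpectrum.height_eq_orderHeight]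
    have h := (key p hpm).2
    change p.height = _
    generalize p.height = a at h
    have ha : a ≠ ⊤ := by
      rintro rfl
      simp at h
    lift a to ℕ using ha
    norm_cast at h ⊢
    omega
  · exact ringKrullDim_quotient_le_of_height _ fun p hp => (key p hp).2
  · obtain ⟨p, hp⟩ := Ideal.nonempty_minimalPrimes (initialIdeal_ne_top (L := L) hcols hpointed)
    have : p.IsPrime := hp.1.1
    have h1 := tdeg_le_ringKrullDim (k := ℂ) (MvPolynomial (Fin n) ℂ ⧸ p)
    rw [(key p hp).1] at h1
    exact h1.trans (ringKrullDim_le_of_surjective _ (Ideal.Quotient.factor_surjective hp.1.2))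

end
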